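/- Let G be a finite simple connected graph with at least one vertex. Then car(G) = 1 if and only if G contains no cycle (i.e., G is a tree). -/

import Mathlib

open SimpleGraph

/-- A set `S` is cycle convex in `G` if no vertex `w` outside `S` is such that the
subgraph induced by `S ∪ {w}` contains a cycle through `w`. -/
def IsCycleConvex {V : Type*} (G : SimpleGraph V) (S : Set V) : Prop :=
  ∀ w : V, w ∉ S →
    ¬ ∃ c : (G.induce (S ∪ {w})).Walk ⟨w, Set.mem_union_right S rfl⟩
        ⟨w, Set.mem_union_right S rfl⟩, c.IsCycle

/-- The cycle convex hull of `S`: the smallest cycle convex set containing `S`. -/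
def cycleHull {V : Type*} (G : SimpleGraph V) (S : Set V) : Set V :=
  ⋂₀ {T : Set V | S ⊆ T ∧ IsCycleConvex G T}

/-- `S` is Carathéodory independent in the cycle convexity of `G`. -/
def CIndep {V : Type*} (G : SimpleGraph V) (S : Set V) : Prop :=
  ∃ p ∈ cycleHull G S, ∀ a ∈ S, p ∉ cycleHull G (S \ {a})

/-- The Carathéodory number of `G` in the cycle convexity. -/
noncomputable def carNumber {V : Type*} (G : SimpleGraph V) : ℕ :=
  sSup {n : ℕ | ∃ S : Set V, CIndep G S ∧ S.ncard = n}

section CycleConvexity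

variable {V : Type*} {G : SimpleGraph V} {S : Set V}

theorem subset_cycleHull : S ⊆ cycleHull G S :=
  Set.subset_sInter fun _ hT => hT.1

theorem IsCycleConvex.cycleHull_eq (h : IsCycleConvex G S) : cycleHull G S = S :=
  Set.Subset.antisymm (Set.sInter_subset_of_mem ⟨subset_rfl, h⟩) subset_cycleHull

/-- A vertex lying on a cycle of the subgraph induced by `S ∪ {w}` belongs to the hull of `S`. -/
theorem mem_cycleHull_of_isCycle {w : V}
    (c : (G.induce (S ∪ {w})).Walk ⟨w, Set.mem_union_right S rfl⟩
      ⟨w, Set.mem_union_right S rfl⟩) (hc : c.IsCycle) : w ∈ cycleHull G S := by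
  rintro T ⟨hST, hT⟩
  by_contra hw
  have hle : S ∪ {w} ⊆ T ∪ {w} := Set.union_subset_union_left _ hST
  exact hT w hw ⟨c.map (G.induceHomOfLE hle).toHom, hc.map (G.induceHomOfLE hle).injective⟩

theorem SimpleGraph.IsAcyclic.isCycleConvex (h : G.IsAcyclic) (S : Set V) : IsCycleConvex G S :=
  fun w _ ⟨c, hc⟩ => h.induce (S ∪ {w}) c hc

theorem not_isCycleConvex_compl_singleton {v : V} (c : G.Walk v v) (hc : c.IsCycle) :
    ¬ IsCycleConvex G {v}ᶜ := by
  intro h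
  have hs : ∀ x ∈ c.support, x ∈ ({v}ᶜ ∪ {v} : Set V) := fun x _ => (em (x = v)).symm
  refine h v (by simp) ⟨c.induce _ hs, SimpleGraph.Walk.IsCycle.of_map
    (f := (SimpleGraph.Embedding.induce _).toHom) ?_⟩
  rwa [SimpleGraph.Walk.map_induce]

theorem SimpleGraph.Walk.IsCycle.three_le_card [Finite V] {v : V} {c : G.Walk v v}
    (hc : c.IsCycle) : 3 ≤ Nat.card V := by
  have := Fintype.ofFinite V
  have hlen := hc.support_nodup.length_le_card
  rw [List.length_tail, c.length_support, Nat.add_sub_cancel] at hlen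
  rw [Nat.card_eq_fintype_card]
  exact hc.three_le_length.trans hlen

/-- A minimal set that is not cycle convex is Carathéodory independent, with at least two
elements. -/
theorem Minimal.cIndep_and_two_le_ncard [Finite V]
    (hS : Minimal (fun T => ¬ IsCycleConvex G T) S) : CIndep G S ∧ 2 ≤ S.ncard := by
  obtain ⟨p, hp, c, hc⟩ : ∃ p, p ∉ S ∧ ∃ c : (G.induce (S ∪ {p})).Walk
      ⟨p, Set.mem_union_right S rfl⟩ ⟨p, Set.mem_union_right S rfl⟩, c.IsCycle := by
    simpa only [IsCycleConvex, not_forall, not_not, exists_prop] using hS.prop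
  refine ⟨⟨p, mem_cycleHull_of_isCycle c hc, fun a ha => ?_⟩, ?_⟩
  · have hconv : IsCycleConvex G (S \ {a}) :=
      not_not.1 (hS.not_prop_of_lt (Set.sdiff_singleton_ssubset.2 ha))
    rw [hconv.cycleHull_eq]
    exact fun h => hp h.1
  · have h3 : 3 ≤ (S ∪ {p}).ncard := hc.three_le_card
    have hle := Set.ncard_union_le S {p}
    rw [Set.ncard_singleton] at hle
    lia

theorem SimpleGraph.IsAcyclic.cIndep_iff (h : G.IsAcyclic) :
    CIndep G S ↔ ∃ p, S = {p} := by
  simp only [CIndep, (h.isCycleConvex _).cycleHull_eq]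
  constructor
  · rintro ⟨p, hp, hpS⟩
    refine ⟨p, Set.eq_singleton_iff_unique_mem.2 ⟨hp, fun a ha => ?_⟩⟩
    by_contra hne
    exact hpS a ha ⟨hp, Ne.symm hne⟩
  · rintro ⟨p, rfl⟩
    exact ⟨p, by simp⟩

theorem CIndep.ncard_le_carNumber [Finite V] (h : CIndep G S) : S.ncard ≤ carNumber G := by
  refine le_csSup ⟨Nat.card V, ?_⟩ ⟨S, h, rfl⟩
  rintro _ ⟨T, -, rfl⟩
  exact Set.ncard_le_card T

end CycleConvexity

/-- Proposition 2(a): a finite connected graph has Caratheodory number 1 iff it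
contains no cycle. -/
theorem stmt_6 {V : Type*} [Fintype V] [Nonempty V] (G : SimpleGraph V)
    (hG : G.Connected) :
    carNumber G = 1 ↔ G.IsAcyclic := by
  constructor
  · intro h v c hc
    obtain ⟨S, hS⟩ := exists_minimal_of_wellFoundedLT (fun T => ¬ IsCycleConvex G T)
      ⟨_, not_isCycleConvex_compl_singleton c hc⟩
    obtain ⟨hind, htwo⟩ := hS.cIndep_and_two_le_ncard
    have := hind.ncard_le_carNumber
    lia
  · intro h
    have hset : {n : ℕ | ∃ S : Set V, CIndep G S ∧ S.ncard = n} = {1} := by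
      ext n
      simp [h.cIndep_iff, eq_comm]
    rw [carNumber, hset, csSup_singleton]
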